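/- If every worker belongs to exactly one pair of the normal form S* and every firm belongs to exactly one pair of S*, then S* is the graph of a bijection μ : W → F, and μ is the unique stable matching of the matching problem. -/

import Mathlib

/-- `(w,f)` blocks the matching `μ`: `f ≻_w μ(w)` and `w ≻_f μ⁻¹(f)`.
`prefW w f f'` means worker `w` strictly prefers firm `f` to firm `f'`;
`prefF f w w'` means firm `f` strictly prefers worker `w` to worker `w'`. -/
def Blocks {W F : Type*} (prefW : W → F → F → Prop) (prefF : F → W → W → Prop)
    (μ : W ≃ F) (w : W) (f : F) : Prop :=
  prefW w f (μ w) ∧ prefF f w (μ.symm f)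

/-- A matching is stable if no pair blocks it. -/
def IsStableMatching {W F : Type*} (prefW : W → F → F → Prop)
    (prefF : F → W → W → Prop) (μ : W ≃ F) : Prop :=
  ∀ w f, ¬ Blocks prefW prefF μ w f

/-- A pair `(w,f)` is unattractive in `S`. -/
def Unattractive {W F : Type*} (prefW : W → F → F → Prop) (prefF : F → W → W → Prop)
    (S : Set (W × F)) (w : W) (f : F) : Prop :=
  (∃ f', (w, f') ∈ S ∧ prefW w f' f ∧
      ∀ w', w' ≠ w → (w', f') ∈ S → prefF f' w w') ∨
  (∃ w', (w', f) ∈ S ∧ prefF f w' w ∧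
      ∀ f'', f'' ≠ f → (w', f'') ∈ S → prefW w' f f'')

/-- `delta S` is `S` with all pairs unattractive in `S` removed. -/
def delta {W F : Type*} (prefW : W → F → F → Prop) (prefF : F → W → W → Prop)
    (S : Set (W × F)) : Set (W × F) :=
  {p ∈ S | ¬ Unattractive prefW prefF S p.1 p.2}

/-- The normal form: the fixed point of `delta` reached by iterating from `W × F`.
Since `delta S ⊆ S` and `W × F` is finite, `Fintype.card (W × F)` iterations suffice. -/
def NormalForm (W F : Type*) [Fintype W] [Fintype F]
    (prefW : W → F → F → Prop) (prefF : F → W → W → Prop) : Set (W × F) :=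
  (delta prefW prefF)^[Fintype.card (W × F)] Set.univ

/-- `μ` is `S`-stable: `S`-admissible and no pair of `S` blocks it within `S`. -/
def SStable {W F : Type*} (prefW : W → F → F → Prop) (prefF : F → W → W → Prop)
    (S : Set (W × F)) (μ : W ≃ F) : Prop :=
  (∀ w, (w, μ w) ∈ S) ∧
  ∀ w f, (w, f) ∈ S → ¬ (prefW w f (μ w) ∧ prefF f w (μ.symm f))

/-- Arcs of the matching digraph `D(S)`: from `(w,f)` to `(w,f')` whenever `f' ≻_w f`,
and from `(w,f)` to `(w',f)` whenever `w' ≻_f w`. -/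
def Arc {W F : Type*} (prefW : W → F → F → Prop) (prefF : F → W → W → Prop)
    (S : Set (W × F)) (p q : W × F) : Prop :=
  p ∈ S ∧ q ∈ S ∧
    ((p.1 = q.1 ∧ prefW p.1 q.2 p.2) ∨ (p.2 = q.2 ∧ prefF p.2 q.1 p.1))

/-- `D(S)` contains a directed cycle: distinct vertices `c 0, …, c (n-1)` with `n ≥ 1`,
`c n = c 0`, and an arc from each vertex to the next. -/
def HasDirectedCycle {W F : Type*} (prefW : W → F → F → Prop)
    (prefF : F → W → W → Prop) (S : Set (W × F)) : Prop :=
  ∃ (n : ℕ) (c : Fin (n + 1) → W × F), 0 < n ∧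
    Function.Injective (fun i : Fin n => c i.castSucc) ∧
    c (Fin.last n) = c 0 ∧
    ∀ i : Fin n, Arc prefW prefF S (c i.castSucc) (c i.succ)

/-- The preference lists possess a cycle: there are `k ≥ 2`, distinct workers
`w_1, …, w_k` and distinct firms `f_1, …, f_k` (indexed by `ZMod k`) with
`f_{j+1} ≻_{w_j} f_j` and `w_j ≻_{f_j} w_{j-1}` for all `j`, indices modulo `k`. -/
def PrefCycle {W F : Type*} (prefW : W → F → F → Prop)
    (prefF : F → W → W → Prop) : Prop :=
  ∃ k : ℕ, 2 ≤ k ∧ ∃ (ws : ZMod k → W) (fs : ZMod k → F),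
    Function.Injective ws ∧ Function.Injective fs ∧
    ∀ j : ZMod k, prefW (ws j) (fs (j + 1)) (fs j) ∧ prefF (fs j) (ws j) (ws (j - 1))

/-!
One reduction step does not change which matchings are `S`-stable. An `S`-stable matching contains
no unattractive pair, as the reason for removing that pair would block it. Conversely, let `μ` be
`delta S`-stable and let `(w, f) ∈ S` block it. Then `(w, f)` is unattractive, so one of its
members, say `w`, prefers to `f` a firm that ranks `w` best in `S`; this firm blocks `μ` together
with `w`, so it was removed too, and only because of a still better firm of the same kind. This
would give `w` an infinite sequence of ever better firms.

Hence a matching is stable iff it is `S*`-stable, and if `S*` is the graph of a bijection then this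
bijection is the only `S*`-stable matching.
-/

theorem exists_equiv_of_forall_existsUnique {α β : Type*} {r : α → β → Prop}
    (hα : ∀ a, ∃! b, r a b) (hβ : ∀ b, ∃! a, r a b) : ∃ e : α ≃ β, ∀ a b, r a b ↔ e a = b := by
  obtain ⟨m, hm⟩ := forall_existsUnique_iff.mp hα
  have hbij : m.Bijective := m.bijective_iff_existsUnique.mpr (by simpa only [hm] using hβ)
  exact ⟨.ofBijective m hbij, fun _ _ => hm⟩

/-- `a` is the best element of `s` for the strict preference `r`. Applied to the set of partners of
an agent in `S`, it names the pairs that make other pairs unattractive. -/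
def IsBestIn {α : Type*} (r : α → α → Prop) (s : Set α) (a : α) : Prop :=
  a ∈ s ∧ ∀ b, b ≠ a → b ∈ s → r a b

section Reduction

variable {W F : Type*} {prefW : W → F → F → Prop} {prefF : F → W → W → Prop}
  {S : Set (W × F)} {μ : W ≃ F} {w : W} {f : F}

theorem unattractive_iff_exists_isBestIn :
    Unattractive prefW prefF S w f ↔
      (∃ f', prefW w f' f ∧ IsBestIn (prefF f') {w' | (w', f') ∈ S} w) ∨
      (∃ w', prefF f w' w ∧ IsBestIn (prefW w') {f' | (w', f') ∈ S} f) := by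
  simp only [Unattractive, IsBestIn, Set.mem_ofPred_eq, and_left_comm]

theorem delta_preimage_swap :
    delta prefF prefW (Prod.swap ⁻¹' S) = Prod.swap ⁻¹' delta prefW prefF S :=
  Set.ext fun _ => and_congr_right fun _ => not_congr or_comm

theorem SStable.swap (h : SStable prefW prefF S μ) :
    SStable prefF prefW (Prod.swap ⁻¹' S) μ.symm :=
  ⟨fun f => by simpa using h.1 (μ.symm f), fun f w hS hb => h.2 w f hS hb.symm⟩

theorem sStable_univ_iff : SStable prefW prefF Set.univ μ ↔ IsStableMatching prefW prefF μ := by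
  simp only [SStable, IsStableMatching, Blocks, Set.mem_univ, implies_true, true_and,
    forall_const]

theorem IsBestIn.blocks [Std.Irrefl (prefW w)]
    (hbest : IsBestIn (prefF f) {w' | (w', f) ∈ S} w) (hμ : ∀ w, (w, μ w) ∈ S)
    (hpref : prefW w f (μ w)) : Blocks prefW prefF μ w f := by
  have hne : μ.symm f ≠ w := by
    rintro rfl
    exact irrefl_of (prefW _) f (by simpa using hpref)
  exact ⟨hpref, hbest.2 _ hne (by simpa using hμ (μ.symm f))⟩

theorem SStable.not_pref_of_isBestIn [Std.Irrefl (prefW w)] (h : SStable prefW prefF S μ)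
    (hbest : IsBestIn (prefF f) {w' | (w', f) ∈ S} w) : ¬ prefW w f (μ w) :=
  fun hpref => h.2 w f hbest.1 (hbest.blocks h.1 hpref)

theorem SStable.to_delta [∀ w, Std.Irrefl (prefW w)] [∀ f, Std.Irrefl (prefF f)]
    (h : SStable prefW prefF S μ) : SStable prefW prefF (delta prefW prefF S) μ := by
  refine ⟨fun w => ⟨h.1 w, fun hun => ?_⟩, fun w f hδ => h.2 w f hδ.1⟩
  obtain ⟨f', hpref, hbest⟩ | ⟨w', hpref, hbest⟩ := unattractive_iff_exists_isBestIn.mp hun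
  · exact h.not_pref_of_isBestIn hbest hpref
  · exact h.swap.not_pref_of_isBestIn hbest (by simpa using hpref)

theorem SStable.unattractive_of_blocks_of_delta (h : SStable prefW prefF (delta prefW prefF S) μ)
    (hS : (w, f) ∈ S) (hb : Blocks prefW prefF μ w f) : Unattractive prefW prefF S w f :=
  by_contra fun hun => h.2 w f ⟨hS, hun⟩ hb

theorem SStable.not_pref_of_isBestIn_of_delta [IsTrans F (prefW w)] [IsWellFounded F (prefW w)]
    [∀ f, Std.Asymm (prefF f)] (h : SStable prefW prefF (delta prefW prefF S) μ)
    (hbest : IsBestIn (prefF f) {w' | (w', f) ∈ S} w) : ¬ prefW w f (μ w) := by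
  induction f using IsWellFounded.induction (prefW w) with
  | ind f ih =>
    intro hpref
    have hb : Blocks prefW prefF μ w f := hbest.blocks (fun w => (h.1 w).1) hpref
    obtain ⟨f', hpref', hbest'⟩ | ⟨w', hpref', hbest'⟩ :=
      unattractive_iff_exists_isBestIn.mp (h.unattractive_of_blocks_of_delta hbest.1 hb)
    · exact ih f' hpref' hbest' (trans_of (prefW w) hpref' hpref)
    · have hne : w' ≠ w := by
        rintro rfl
        exact irrefl_of (prefF f) _ hpref'
      exact asymm_of (prefF f) hpref' (hbest.2 w' hne hbest'.1)

section WellFounded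

variable [∀ w, IsTrans F (prefW w)] [∀ w, IsWellFounded F (prefW w)]
  [∀ f, IsTrans W (prefF f)] [∀ f, IsWellFounded W (prefF f)]

theorem SStable.of_delta (h : SStable prefW prefF (delta prefW prefF S) μ) :
    SStable prefW prefF S μ := by
  have hswap : SStable prefF prefW (delta prefF prefW (Prod.swap ⁻¹' S)) μ.symm :=
    delta_preimage_swap (S := S) ▸ h.swap
  refine ⟨fun w => (h.1 w).1, fun w f hS hb => ?_⟩
  obtain ⟨f', hpref, hbest⟩ | ⟨w', hpref, hbest⟩ :=
    unattractive_iff_exists_isBestIn.mp (h.unattractive_of_blocks_of_delta hS hb)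
  · exact h.not_pref_of_isBestIn_of_delta hbest (trans_of (prefW w) hpref hb.1)
  · exact hswap.not_pref_of_isBestIn_of_delta hbest (trans_of (prefF f) hpref hb.2)

theorem sStable_delta_iff : SStable prefW prefF (delta prefW prefF S) μ ↔ SStable prefW prefF S μ :=
  ⟨SStable.of_delta, SStable.to_delta⟩

theorem sStable_delta_iterate_iff (n : ℕ) :
    SStable prefW prefF ((delta prefW prefF)^[n] S) μ ↔ SStable prefW prefF S μ := by
  induction n with
  | zero => rfl
  | succ n ih => rw [Function.iterate_succ_apply', sStable_delta_iff, ih]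

end WellFounded

theorem sStable_iff_eq_of_graph [∀ w, Std.Irrefl (prefW w)] {μ' : W ≃ F}
    (hgraph : ∀ w f, (w, f) ∈ S ↔ μ w = f) : SStable prefW prefF S μ' ↔ μ' = μ := by
  refine ⟨fun h => Equiv.ext fun w => ((hgraph w _).mp (h.1 w)).symm, ?_⟩
  rintro rfl
  refine ⟨fun w => (hgraph w _).mpr rfl, fun w f hS hb => ?_⟩
  obtain rfl := (hgraph w f).mp hS
  exact irrefl_of (prefW w) _ hb.1

end Reduction

/-- As `prefW w f f'` stands for `f ≻_w f'`, well-foundedness excludes infinite sequences of ever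
better partners. -/
theorem normalForm_graph_unique_stable_general {W F : Type*}
    (prefW : W → F → F → Prop) (prefF : F → W → W → Prop)
    [∀ w, IsTrans F (prefW w)] [∀ w, IsWellFounded F (prefW w)]
    [∀ f, IsTrans W (prefF f)] [∀ f, IsWellFounded W (prefF f)] (n : ℕ)
    (hw : ∀ w : W, ∃! f : F, (w, f) ∈ (delta prefW prefF)^[n] Set.univ)
    (hf : ∀ f : F, ∃! w : W, (w, f) ∈ (delta prefW prefF)^[n] Set.univ) :
    ∃ μ : W ≃ F, (∀ w f, (w, f) ∈ (delta prefW prefF)^[n] Set.univ ↔ μ w = f) ∧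
      IsStableMatching prefW prefF μ ∧
      ∀ μ' : W ≃ F, IsStableMatching prefW prefF μ' → μ' = μ := by
  obtain ⟨μ, hgraph⟩ := exists_equiv_of_forall_existsUnique hw hf
  have hstable (μ' : W ≃ F) : IsStableMatching prefW prefF μ' ↔ μ' = μ := by
    rw [← sStable_univ_iff, ← sStable_delta_iterate_iff n, sStable_iff_eq_of_graph hgraph]
  exact ⟨μ, hgraph, (hstable μ).mpr rfl, fun μ' => (hstable μ').mp⟩

/-- If every worker and every firm belongs to exactly one pair of `S*`, then `S*` is the
graph of a bijection which is the unique stable matching. -/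
theorem normalForm_graph_unique_stable {W F : Type*} [Fintype W] [Fintype F] [Nonempty W]
    (hcard : Fintype.card W = Fintype.card F)
    (prefW : W → F → F → Prop) (prefF : F → W → W → Prop)
    (hW : ∀ w, IsStrictTotalOrder F (prefW w))
    (hF : ∀ f, IsStrictTotalOrder W (prefF f))
    (hw : ∀ w : W, ∃! f : F, (w, f) ∈ NormalForm W F prefW prefF)
    (hf : ∀ f : F, ∃! w : W, (w, f) ∈ NormalForm W F prefW prefF) :
    ∃ μ : W ≃ F, (∀ w f, (w, f) ∈ NormalForm W F prefW prefF ↔ μ w = f) ∧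
      IsStableMatching prefW prefF μ ∧
      ∀ μ' : W ≃ F, IsStableMatching prefW prefF μ' → μ' = μ := by
  have (w : W) : IsWellFounded F (prefW w) := ⟨Finite.wellFounded_of_trans_of_irrefl _⟩
  have (f : F) : IsWellFounded W (prefF f) := ⟨Finite.wellFounded_of_trans_of_irrefl _⟩
  exact normalForm_graph_unique_stable_general prefW prefF _ hw hf
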